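/- Assume $\mathrm{char}(k) \ne 2$ and let $N \ge 1$. The complex $C$ satisfies $d \circ d = 0$, and its cohomology is: $H^0(C) \cong k[x]/(x^N)$; $H^{-m}(C) = 0$ for all odd $m \ge 1$; and $H^{-m}(C) \cong k[x]/(x^N)$ for all even $m \ge 2$. (This is the cohomology of the derived contraction algebra of the Pagoda flop $uv = (y+x^N)(y-x^N)$, matching the model $k[x,\zeta]$, $d\zeta = x^N$.) -/

import Mathlib

open MvPolynomial

noncomputable section

/-- `S = k[x,y]`, with `x = X 0` and `y = X 1`. -/
abbrev Sk (k : Type) [Field k] : Type := MvPolynomial (Fin 2) k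

/-- `f = y + x^N`. -/
def fP (k : Type) [Field k] (N : ℕ) : Sk k := X 1 + (X 0) ^ N

/-- `g = y - x^N`. -/
def gP (k : Type) [Field k] (N : ℕ) : Sk k := X 1 - (X 0) ^ N

/-- The differential `d : C^{-1} → C^0`, `(p, q) ↦ p·f + q·g`
(corresponding to `dα = f`, `dβ = g`). -/
def d1 (k : Type) [Field k] (N : ℕ) : Sk k × Sk k →ₗ[Sk k] Sk k :=
  fP k N • LinearMap.fst (Sk k) (Sk k) (Sk k) +
    gP k N • LinearMap.snd (Sk k) (Sk k) (Sk k)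

/-- The differential `C^{-m} → C^{-m+1}` for even `m ≥ 2`, in the bases
`(w_m^α, w_m^β)`, `(w_{m-1}^α, w_{m-1}^β)`:
`d(w^α) = f·w^β - g·w^α` and `d(w^β) = g·w^α - f·w^β`. -/
def dEven (k : Type) [Field k] (N : ℕ) : Sk k × Sk k →ₗ[Sk k] Sk k × Sk k :=
  LinearMap.prod
    ((-gP k N) • LinearMap.fst (Sk k) (Sk k) (Sk k) +
      gP k N • LinearMap.snd (Sk k) (Sk k) (Sk k))
    (fP k N • LinearMap.fst (Sk k) (Sk k) (Sk k) +
      (-fP k N) • LinearMap.snd (Sk k) (Sk k) (Sk k))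

/-- The differential `C^{-m} → C^{-m+1}` for odd `m ≥ 3`:
`d(w^α) = f·(w^α + w^β)` and `d(w^β) = g·(w^α + w^β)`. -/
def dOdd (k : Type) [Field k] (N : ℕ) : Sk k × Sk k →ₗ[Sk k] Sk k × Sk k :=
  LinearMap.prod
    (fP k N • LinearMap.fst (Sk k) (Sk k) (Sk k) +
      gP k N • LinearMap.snd (Sk k) (Sk k) (Sk k))
    (fP k N • LinearMap.fst (Sk k) (Sk k) (Sk k) +
      gP k N • LinearMap.snd (Sk k) (Sk k) (Sk k))

/-- The differential `D m : C^{-m} → C^{-m+1}` for `m ≥ 2`. -/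
def D (k : Type) [Field k] (N : ℕ) (m : ℕ) : Sk k × Sk k →ₗ[Sk k] Sk k × Sk k :=
  if Even m then dEven k N else dOdd k N

/-- `k[x]/(x^N)`. -/
abbrev Qmod (k : Type) [Field k] (N : ℕ) : Type :=
  Polynomial k ⧸ Ideal.span {(Polynomial.X : Polynomial k) ^ N}

/-- Evaluation `x ↦ x`, `y ↦ h`. -/
def evY (k : Type) [Field k] (h : Polynomial k) : Sk k →ₐ[k] Polynomial k :=
  MvPolynomial.aeval ![Polynomial.X, h]

/-- The inclusion `k[x] → k[x,y]`. -/
def incX (k : Type) [Field k] : Polynomial k →ₐ[k] Sk k :=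
  Polynomial.aeval (X 0)

lemma evY_incX (k : Type) [Field k] (h p : Polynomial k) : evY k h (incX k p) = p := by
  have : (evY k h).comp (incX k) = AlgHom.id k _ := by
    apply Polynomial.algHom_ext
    simp [evY, incX]
  exact DFunLike.congr_fun this p

lemma evY_dvd (k : Type) [Field k] (h : Polynomial k) (p : Sk k) :
    ∃ a, p = incX k (evY k h p) + (X 1 - incX k h) * a := by
  let I : Ideal (Sk k) := Ideal.span {X 1 - incX k h}
  have : ((Ideal.Quotient.mkₐ k I).comp (incX k)).comp (evY k h) = Ideal.Quotient.mkₐ k I := by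
    apply MvPolynomial.algHom_ext
    intro i
    fin_cases i
    · simp [evY, incX]
    · simp only [evY, AlgHom.comp_apply, Fin.mk_one, aeval_X, Matrix.cons_val_one,
        Matrix.cons_val_fin_one, Ideal.Quotient.mkₐ_eq_mk]
      rw [eq_comm, Ideal.Quotient.eq]
      exact Ideal.subset_span rfl
  have h2 := (DFunLike.congr_fun this p).symm
  simp only [AlgHom.comp_apply, Ideal.Quotient.mkₐ_eq_mk] at h2
  rw [Ideal.Quotient.eq, Ideal.mem_span_singleton] at h2
  obtain ⟨a, ha⟩ := h2
  exact ⟨a, by rw [← ha]; ring⟩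

lemma gP_ne (k : Type) [Field k] (N : ℕ) : gP k N ≠ 0 := by
  intro h
  have := congrArg (evY k (Polynomial.X ^ N + 1)) h
  simp [gP, evY] at this

lemma key (k : Type) [Field k] (hchar : (2 : k) ≠ 0) (N : ℕ) (p q : Sk k)
    (h : fP k N * p + gP k N * q = 0) : ∃ r, p = gP k N * r ∧ q = - fP k N * r := by
  have hp : evY k (Polynomial.X ^ N) p = 0 := by
    have h1 := congrArg (evY k (Polynomial.X ^ N)) h
    have hX : (Polynomial.X ^ N + Polynomial.X ^ N : Polynomial k) ≠ 0 := by
      have : (Polynomial.X ^ N + Polynomial.X ^ N : Polynomial k)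
          = Polynomial.C 2 * Polynomial.X ^ N := by
        rw [map_ofNat]; ring
      rw [this]
      exact mul_ne_zero (by simpa using hchar) (pow_ne_zero _ Polynomial.X_ne_zero)
    have hf : evY k (Polynomial.X ^ N) (fP k N) = Polynomial.X ^ N + Polynomial.X ^ N := by
      simp [fP, evY]
    have hg : evY k (Polynomial.X ^ N) (gP k N) = 0 := by
      simp [gP, evY]
    rw [map_add, map_mul, map_mul, hf, hg, zero_mul, add_zero, map_zero] at h1
    exact (mul_eq_zero.mp h1).resolve_left hX
  obtain ⟨r, hr⟩ := evY_dvd k (Polynomial.X ^ N) p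
  have hg : X 1 - incX k (Polynomial.X ^ N) = gP k N := by simp [incX, gP]
  rw [hp, map_zero, zero_add, hg] at hr
  refine ⟨r, hr, ?_⟩
  apply mul_left_cancel₀ (gP_ne k N)
  rw [hr] at h
  linear_combination h

/-- The map `k[x,y] → k[x]/(x^N)`. -/
def phi (k : Type) [Field k] (N : ℕ) : Sk k →ₗ[k] Qmod k N :=
  ((Ideal.Quotient.mkₐ k (Ideal.span {(Polynomial.X : Polynomial k) ^ N})).comp
    (evY k 0)).toLinearMap

lemma phi_surj (k : Type) [Field k] (N : ℕ) : Function.Surjective (phi k N) := by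
  intro z
  obtain ⟨p, rfl⟩ := Ideal.Quotient.mk_surjective z
  refine ⟨incX k p, ?_⟩
  simp [phi, evY_incX]

lemma d1_apply (k : Type) [Field k] (N : ℕ) (p : Sk k × Sk k) :
    d1 k N p = fP k N * p.1 + gP k N * p.2 := by simp [d1]

lemma dEven_apply (k : Type) [Field k] (N : ℕ) (p : Sk k × Sk k) :
    dEven k N p = (gP k N * (p.2 - p.1), fP k N * (p.1 - p.2)) := by
  ext1 <;> simp [dEven] <;> ring

lemma dOdd_apply (k : Type) [Field k] (N : ℕ) (p : Sk k × Sk k) :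
    dOdd k N p = (d1 k N p, d1 k N p) := by
  simp [dOdd, d1]

lemma phi_eq_zero (k : Type) [Field k] (hchar : (2 : k) ≠ 0) (N : ℕ) (hN : 1 ≤ N) (p : Sk k) :
    phi k N p = 0 ↔ p ∈ LinearMap.range (d1 k N) := by
  have h0 : phi k N p = 0 ↔ (Polynomial.X : Polynomial k) ^ N ∣ evY k 0 p := by
    simp only [phi, AlgHom.toLinearMap_apply, AlgHom.comp_apply, Ideal.Quotient.mkₐ_eq_mk]
    rw [Ideal.Quotient.eq_zero_iff_mem, Ideal.mem_span_singleton]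
  rw [h0]
  constructor
  · rintro ⟨q, hq⟩
    obtain ⟨a, ha⟩ := evY_dvd k 0 p
    rw [hq] at ha
    have h2 : (C (2⁻¹ : k) : Sk k) * 2 = 1 := by
      have : (2 : Sk k) = C (2 : k) := by rw [map_ofNat]
      rw [this, ← C_mul, inv_mul_cancel₀ hchar, C_1]
    have hx : incX k (Polynomial.X ^ N * q) = X 0 ^ N * incX k q := by simp [incX]
    rw [hx, map_zero, sub_zero] at ha
    refine ⟨(C (2⁻¹ : k) * (a + incX k q), C (2⁻¹ : k) * (a - incX k q)), ?_⟩
    rw [d1_apply, ha, fP, gP]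
    linear_combination (X 1 * a + X 0 ^ N * incX k q) * h2
  · rintro ⟨q, rfl⟩
    rw [d1_apply]
    have hf : evY k 0 (fP k N) = Polynomial.X ^ N := by simp [fP, evY]
    have hg : evY k 0 (gP k N) = - Polynomial.X ^ N := by simp [gP, evY]
    rw [map_add, map_mul, map_mul, hf, hg]
    exact ⟨evY k 0 q.1 - evY k 0 q.2, by ring⟩

lemma mem_ker_dEven (k : Type) [Field k] (N : ℕ) (p : Sk k × Sk k) :
    p ∈ LinearMap.ker (dEven k N) ↔ p.1 = p.2 := by
  rw [LinearMap.mem_ker, dEven_apply]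
  constructor
  · intro h
    have := congrArg Prod.fst h
    have := (mul_eq_zero.mp this).resolve_left (gP_ne k N)
    exact (sub_eq_zero.mp this).symm
  · intro h
    simp [h]

lemma ker_d1 (k : Type) [Field k] (hchar : (2 : k) ≠ 0) (N : ℕ) :
    LinearMap.ker (d1 k N) = LinearMap.range (dEven k N) := by
  ext p
  rw [LinearMap.mem_ker, LinearMap.mem_range]
  constructor
  · intro h
    rw [d1_apply] at h
    obtain ⟨r, h1, h2⟩ := key k hchar N _ _ h
    refine ⟨(0, r), ?_⟩
    rw [dEven_apply]
    ext1
    · simp [h1]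
    · simp [h2]
  · rintro ⟨q, rfl⟩
    rw [dEven_apply, d1_apply]
    ring

lemma ker_dOdd (k : Type) [Field k] (N : ℕ) :
    LinearMap.ker (dOdd k N) = LinearMap.ker (d1 k N) := by
  ext p
  rw [LinearMap.mem_ker, LinearMap.mem_ker, dOdd_apply]
  simp

lemma quot_equiv {k : Type} [Field k] {M V : Type} [AddCommGroup M] [Module (Sk k) M]
    [Module k M] [IsScalarTower k (Sk k) M] [AddCommGroup V] [Module k V]
    (P : Submodule (Sk k) M) (φ : M →ₗ[k] V) (hs : Function.Surjective φ)
    (hk : ∀ p, φ p = 0 ↔ p ∈ P) : Nonempty ((M ⧸ P) ≃ₗ[k] V) := by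
  have h : P.restrictScalars k = LinearMap.ker φ := by
    ext p
    simp [hk]
  exact ⟨(Submodule.Quotient.restrictScalarsEquiv k P).symm.trans
    ((Submodule.quotEquivOfEq _ _ h).trans (φ.quotKerEquivOfSurjective hs))⟩

/-- The cohomology of the derived contraction algebra of the Pagoda flop
`uv = (y+x^N)(y-x^N)` in characteristic `≠ 2`: `d ∘ d = 0`, `H⁰(C) ≅ k[x]/(x^N)`,
`H^{-m}(C) = 0` for odd `m ≥ 1`, and `H^{-m}(C) ≅ k[x]/(x^N)` for even `m ≥ 2`. -/
theorem stmt12 (k : Type) [Field k] (hchar : (2 : k) ≠ 0) (N : ℕ) (hN : 1 ≤ N) :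
    -- d ∘ d = 0
    (d1 k N ∘ₗ D k N 2 = 0) ∧
    (∀ m : ℕ, 2 ≤ m → D k N m ∘ₗ D k N (m + 1) = 0) ∧
    -- H⁰(C) ≅ k[x]/(x^N)
    Nonempty ((Sk k ⧸ LinearMap.range (d1 k N)) ≃ₗ[k] Qmod k N) ∧
    -- H^{-m}(C) = 0 for odd m ≥ 1
    (LinearMap.ker (d1 k N) = LinearMap.range (D k N 2)) ∧
    (∀ m : ℕ, 3 ≤ m → Odd m →
      LinearMap.ker (D k N m) = LinearMap.range (D k N (m + 1))) ∧
    -- H^{-m}(C) ≅ k[x]/(x^N) for even m ≥ 2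
    (∀ m : ℕ, 2 ≤ m → Even m →
      Nonempty
        ((↥(LinearMap.ker (D k N m)) ⧸
            (LinearMap.range (D k N (m + 1))).comap (LinearMap.ker (D k N m)).subtype)
          ≃ₗ[k] Qmod k N)) := by
  have hE : ∀ m, Even m → D k N m = dEven k N := fun m h => by simp [D, h]
  have hO : ∀ m, ¬ Even m → D k N m = dOdd k N := fun m h => by simp [D, h]
  have hEO : dEven k N ∘ₗ dOdd k N = 0 := by
    refine LinearMap.ext fun p => ?_
    rw [LinearMap.comp_apply, dOdd_apply, dEven_apply]
    simp
  have h1E : d1 k N ∘ₗ dEven k N = 0 := by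
    refine LinearMap.ext fun p => ?_
    rw [LinearMap.comp_apply, dEven_apply, d1_apply, LinearMap.zero_apply]
    ring
  refine ⟨?_, ?_, ?_, ?_, ?_, ?_⟩
  · rw [hE 2 even_two, h1E]
  · intro m _
    by_cases h : Even m
    · rw [hE m h, hO (m + 1) (by simpa [Nat.even_add_one] using h), hEO]
    · rw [hO m h, hE (m + 1) (by simpa [Nat.even_add_one] using h)]
      refine LinearMap.ext fun p => ?_
      have := LinearMap.congr_fun h1E p
      rw [LinearMap.comp_apply] at this
      rw [LinearMap.comp_apply, dOdd_apply, this]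
      rfl
  · exact quot_equiv _ (phi k N) (phi_surj k N) (phi_eq_zero k hchar N hN)
  · rw [hE 2 even_two, ker_d1 k hchar]
  · intro m _ h
    rw [hO m (by simpa using h), hE (m + 1) h.add_one, ker_dOdd, ker_d1 k hchar]
  · intro m _ h
    rw [hE m h, hO (m + 1) (by simpa [Nat.even_add_one] using h)]
    refine quot_equiv _ (phi k N ∘ₗ ((LinearMap.fst (Sk k) (Sk k) (Sk k)).restrictScalars k) ∘ₗ
      ((LinearMap.ker (dEven k N)).subtype.restrictScalars k)) ?_ ?_
    · intro z
      obtain ⟨p, hp⟩ := phi_surj k N z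
      exact ⟨⟨(p, p), (mem_ker_dEven k N _).2 rfl⟩, hp⟩
    · rintro ⟨⟨p, q⟩, hpq⟩
      have hpq' : p = q := (mem_ker_dEven k N _).1 hpq
      subst hpq'
      refine (phi_eq_zero k hchar N hN p).trans ?_
      rw [Submodule.mem_comap, LinearMap.mem_range, LinearMap.mem_range]
      simp [dOdd_apply]
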